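/- Let (N, B, L) be a Hadamard triple in ℝ. If p is an integer with p ≥ 2 and gcd(p, N) = 1, then (N, B, pL) is also a Hadamard triple, where pL = {p·ℓ : ℓ ∈ L}. -/

import Mathlib

/-- `(N,B,L)` is a Hadamard triple in `ℝ`: `N ≥ 2`, `B, L ⊂ ℤ` finite with
`#B = #L ≥ 2`, and the matrix `((1/√#B) e^{2πi bℓ/N})_{b∈B, ℓ∈L}` is unitary;
equivalently, for all distinct `ℓ, ℓ' ∈ L`, `∑_{b∈B} e^{2πi b(ℓ-ℓ')/N} = 0`. -/
def IsHadamardTriple (N : ℕ) (B L : Finset ℤ) : Prop :=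
  2 ≤ N ∧ 2 ≤ B.card ∧ B.card = L.card ∧
    ∀ l ∈ L, ∀ l' ∈ L, l ≠ l' →
      ∑ b ∈ B, Complex.exp (2 * Real.pi * Complex.I * (b : ℂ) * ((l : ℂ) - (l' : ℂ)) / (N : ℂ)) = 0

/-!
All primitive `N`-th roots of unity have the same minimal polynomial over `ℚ`, so a rational linear
relation among powers of one of them holds for every other. The orthogonality relations of
`(N, B, L)` are such relations among powers of `ζ = e^{2πi/N}`, and those of `(N, B, pL)` arise from
them by replacing `ζ` with `ζ ^ p`.
-/

open scoped IntermediateField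

section PrimitiveRoots

variable {K F : Type*} [Field K] [CharZero K] [Field F] [CharZero F] {n : ℕ} [NeZero n]
  {ζ : K} {ξ : F}

theorem exists_algHom_adjoin_primitiveRoot (hζ : IsPrimitiveRoot ζ n) (hξ : IsPrimitiveRoot ξ n) :
    ∃ σ : ℚ⟮ζ⟯ →ₐ[ℚ] F, σ (IntermediateField.AdjoinSimple.gen ℚ ζ) = ξ := by
  have hn : 0 < n := NeZero.pos n
  have hζ_int : IsIntegral ℚ ζ := (hζ.isIntegral hn).tower_top
  have hminpoly : minpoly ℚ ζ = minpoly ℚ ξ := by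
    rw [← Polynomial.cyclotomic_eq_minpoly_rat hζ hn, Polynomial.cyclotomic_eq_minpoly_rat hξ hn]
  have hroot : ξ ∈ (minpoly ℚ ζ).aroots F :=
    Polynomial.mem_aroots.mpr ⟨minpoly.ne_zero hζ_int, hminpoly ▸ minpoly.aeval ℚ ξ⟩
  exact ⟨(IntermediateField.algHomAdjoinIntegralEquiv ℚ hζ_int).symm ⟨ξ, hroot⟩,
    IntermediateField.algHomAdjoinIntegralEquiv_symm_apply_gen ℚ hζ_int ⟨ξ, hroot⟩⟩

theorem sum_mul_zpow_primitiveRoot_eq_zero {ι : Type*} {s : Finset ι} {c : ι → ℚ} {e : ι → ℤ}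
    (hζ : IsPrimitiveRoot ζ n) (hξ : IsPrimitiveRoot ξ n) (h : ∑ i ∈ s, c i * ζ ^ e i = 0) :
    ∑ i ∈ s, c i * ξ ^ e i = 0 := by
  obtain ⟨σ, hσ⟩ := exists_algHom_adjoin_primitiveRoot hζ hξ
  have h_adjoin : ∑ i ∈ s, c i * IntermediateField.AdjoinSimple.gen ℚ ζ ^ e i = 0 := by
    apply (algebraMap ℚ⟮ζ⟯ K).injective
    simpa only [map_sum, map_mul, map_ratCast, map_zpow₀,
      IntermediateField.AdjoinSimple.algebraMap_gen, map_zero] using h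
  simpa only [map_sum, map_mul, map_ratCast, map_zpow₀, hσ, map_zero] using congrArg σ h_adjoin

end PrimitiveRoots

theorem exp_two_pi_mul_I_mul_div_eq_zpow (z : ℂ) (b l l' : ℤ) :
    Complex.exp (2 * Real.pi * Complex.I * b * (l - l') / z) =
      Complex.exp (2 * Real.pi * Complex.I / z) ^ (b * (l - l')) := by
  rw [← Complex.exp_int_mul]
  push_cast
  ring_nf

theorem IsHadamardTriple.sum_zpow_eq_zero {K : Type*} [Field K] [CharZero K] {N : ℕ}
    {B L : Finset ℤ} {ζ : K} (h : IsHadamardTriple N B L) (hζ : IsPrimitiveRoot ζ N) {l l' : ℤ}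
    (hl : l ∈ L) (hl' : l' ∈ L) (hne : l ≠ l') :
    ∑ b ∈ B, ζ ^ (b * (l - l')) = 0 := by
  obtain ⟨hN, -, -, horth⟩ := h
  have : NeZero N := ⟨by omega⟩
  have hexp : ∑ b ∈ B, Complex.exp (2 * Real.pi * Complex.I / N) ^ (b * (l - l')) = 0 := by
    simpa only [exp_two_pi_mul_I_mul_div_eq_zpow] using horth l hl l' hl' hne
  simpa only [Pi.one_apply, Rat.cast_one, one_mul] using
    sum_mul_zpow_primitiveRoot_eq_zero (c := 1) (Complex.isPrimitiveRoot_exp N (NeZero.ne N)) hζ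
      (by simpa only [Pi.one_apply, Rat.cast_one, one_mul] using hexp)

theorem hadamard_triple_scale_general {N : ℕ} {B L : Finset ℤ} (h : IsHadamardTriple N B L)
    {p : ℤ} (hpN : IsCoprime p N) : IsHadamardTriple N B (L.image (p * ·)) := by
  have ⟨hN, hB, hBL, _⟩ := h
  have hp : p ≠ 0 := by
    rintro rfl
    have := Int.isUnit_iff.mp (isCoprime_zero_left.mp hpN)
    omega
  have hζ : IsPrimitiveRoot (Complex.exp (2 * Real.pi * Complex.I / N) ^ p) N :=
    (Complex.isPrimitiveRoot_exp N (by omega)).zpow_of_gcd_eq_one p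
      (Int.isCoprime_iff_gcd_eq_one.mp hpN)
  refine ⟨hN, hB, ?_, ?_⟩
  · rw [Finset.card_image_of_injective _ (mul_right_injective₀ hp), hBL]
  · simp only [Finset.forall_mem_image]
    intro l hl l' hl' hne
    simp only [exp_two_pi_mul_I_mul_div_eq_zpow]
    simpa only [← zpow_mul, mul_sub, mul_left_comm p] using
      h.sum_zpow_eq_zero hζ hl hl' (ne_of_apply_ne _ hne)

theorem hadamard_triple_scale (N : ℕ) (B L : Finset ℤ) (h : IsHadamardTriple N B L)
    (p : ℕ) (hp : 2 ≤ p) (hpN : Nat.Coprime p N) :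
    IsHadamardTriple N B (L.image (fun l => (p : ℤ) * l)) := by
  exact hadamard_triple_scale_general h (Nat.isCoprime_iff_coprime.mpr hpN)
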